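/- Fix integer weights d_1,…,d_n ≥ 1 on ℝⁿ and let m ∈ ℕ. Let u be a tempered distribution on ℝⁿ with compact support (there is a compact set K ⊆ ℝⁿ such that ⟨u, φ⟩ = 0 whenever φ ∈ 𝒮(ℝⁿ) vanishes on a neighbourhood of K) satisfying ⟨u, φ ∘ δ_λ⟩ = λ^m · ⟨u, φ⟩ for all λ > 0 and all φ ∈ 𝒮(ℝⁿ). Then there exist complex constants c_b, indexed by the finitely many multi-indices b ∈ ℕⁿ with |b|_H = m, such that ⟨u, φ⟩ = Σ_{|b|_H = m} c_b (∂^b φ)(0) for all φ ∈ 𝒮(ℝⁿ); that is, u is a finite linear combination of derivatives of the Dirac distribution at the origin of homogeneous order exactly m. -/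

import Mathlib

/-!
The proof needs no prior structure theorem for distributions supported at a point.

* *Flat test functions are killed* (`apply_eq_zero_of_flat`). Suppose all derivatives of `R` of
  order at most `m` vanish at `0`, and let `χ` be a cutoff equal to `1` near the support of `u`.
  For `0 < λ ≤ 1`, homogeneity gives `λ ^ m * u R = u (R ∘ δ_λ) = u (χ * (R ∘ δ_λ))`. Every
  Schwartz seminorm of `χ * (R ∘ δ_λ)` is `O(λ ^ (m + 1))`, because all weights are at least `1`
  and `D^j R` is `O(‖y‖ ^ (m + 1 - j))`. Continuity of `u` yields `u R = O(λ)`, so `u R = 0`.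

* *Linear algebra.* The functionals `φ ↦ ∂^b φ 0` with all `b i ≤ m` are finitely many, and their
  common kernel consists of functions flat to order `m` (`flat_of_mpd_eq_zero`). Hence `u` is a
  linear combination `∑ c b * ∂^b φ 0` over these `b`.

* *Selecting the homogeneous part.* Since `∂^b (φ ∘ δ_λ) 0 = λ ^ |b|_H * ∂^b φ 0`
  (`mpdL_comp_dilEquiv`), homogeneity of `u` reads
  `∑ c b * ∂^b φ 0 * λ ^ |b|_H = u φ * λ ^ m` for all `λ > 0`. This is an identity of polynomials
  in `λ`, and its coefficient of degree `m` is the claim.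
-/

open scoped BigOperators

/-- Graded dilation `δ_λ` on `ℝⁿ` with integer weights `d`. -/
noncomputable def dil {n : ℕ} (d : Fin n → ℕ) (lam : ℝ) (η : Fin n → ℝ) : Fin n → ℝ :=
  fun i => lam ^ (d i) * η i

/-- Homogeneous order `|b|_H = ∑ i, b i * d i` of a multi-index. -/
def horder {n : ℕ} (d : Fin n → ℕ) (b : Fin n → ℕ) : ℕ := ∑ i, b i * d i

/-- Partial derivative in the `i`-th coordinate direction. -/
noncomputable def pd {n : ℕ} (i : Fin n) (f : (Fin n → ℝ) → ℂ) : (Fin n → ℝ) → ℂ :=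
  fun x => fderiv ℝ f x (Pi.single i 1)

/-- Iterated partial derivative `∂^b` associated to the multi-index `b`. -/
noncomputable def mpd {n : ℕ} (b : Fin n → ℕ) (f : (Fin n → ℝ) → ℂ) : (Fin n → ℝ) → ℂ :=
  ((List.finRange n).foldr (fun i g => (pd i)^[b i] ∘ g) id) f


open SchwartzMap LineDeriv Filter Topology
open scoped ContDiff

/-- Taylor estimate for the derivatives of a function flat to order `m` at the origin. The
subtraction is truncated: for `j > m` the statement is that `D^j R` is bounded. -/
theorem exists_bound_of_flat {n : ℕ} (m : ℕ) (R : 𝓢(Fin n → ℝ, ℂ))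
    (hR : ∀ j ≤ m, iteratedFDeriv ℝ j R 0 = 0) (j : ℕ) :
    ∃ C : ℝ, 0 ≤ C ∧ ∀ y, ‖iteratedFDeriv ℝ j R y‖ ≤ C * ‖y‖ ^ (m + 1 - j) := by
  obtain ⟨t, ht⟩ : ∃ t, m + 1 - j = t := ⟨_, rfl⟩
  induction t generalizing j with
  | zero =>
    refine ⟨SchwartzMap.seminorm ℝ 0 j R, by positivity, fun y => ?_⟩
    simpa [ht] using R.norm_iteratedFDeriv_le_seminorm ℝ j y
  | succ t ih =>
    -- `D^j R` vanishes at `0`: integrate the bound on `D^(j+1) R` along the segment to `y`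
    obtain ⟨C, hC, h⟩ := ih (j + 1) (by omega)
    have ht' : m + 1 - (j + 1) = t := by omega
    refine ⟨C, hC, fun y => ?_⟩
    have key := (convex_closedBall (0 : Fin n → ℝ) ‖y‖).norm_image_sub_le_of_norm_fderiv_le
      (𝕜 := ℝ) (f := iteratedFDeriv ℝ j R) (C := C * ‖y‖ ^ t) (x := 0) (y := y)
      (fun x _ => (R.smooth ⊤).differentiable_iteratedFDeriv (mod_cast ENat.natCast_lt_top j) x)
      (fun x hx => by
        rw [norm_fderiv_iteratedFDeriv]
        refine (h x).trans ?_
        rw [ht']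
        have : ‖x‖ ≤ ‖y‖ := by simpa using hx
        gcongr)
      (by simp) (by simp)
    rw [hR j (by omega), sub_zero, sub_zero] at key
    rw [ht, pow_succ, ← mul_assoc]
    exact key

/-- The dilation `dil d lam`, for `lam ≠ 0`, as a continuous linear automorphism of `ℝⁿ`. -/
noncomputable def dilEquiv {n : ℕ} (d : Fin n → ℕ) (lam : ℝ) (h : lam ≠ 0) :
    (Fin n → ℝ) ≃L[ℝ] (Fin n → ℝ) :=
  ContinuousLinearEquiv.piCongrRight fun i =>
    ContinuousLinearEquiv.unitsEquivAut ℝ (Units.mk0 (lam ^ d i) (pow_ne_zero _ h))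

theorem dilEquiv_apply {n : ℕ} (d : Fin n → ℕ) (lam : ℝ) (h : lam ≠ 0) (x : Fin n → ℝ) :
    dilEquiv d lam h x = dil d lam x := by
  ext i
  simp [dilEquiv, dil, mul_comm]

theorem norm_dil_le {n : ℕ} (d : Fin n → ℕ) (hd : ∀ i, 1 ≤ d i) {lam : ℝ} (h0 : 0 < lam)
    (h1 : lam ≤ 1) (x : Fin n → ℝ) : ‖dil d lam x‖ ≤ lam * ‖x‖ := by
  rw [pi_norm_le_iff_of_nonneg (by positivity)]
  intro i
  rw [dil, norm_mul, Real.norm_of_nonneg (by positivity)]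
  gcongr
  · simpa using pow_le_pow_of_le_one h0.le h1 (hd i)
  · exact norm_le_pi_norm x i

/-- The chain rule contributes `λ ^ j` to `D^j (R ∘ δ_λ)` and flatness of `R` contributes
`λ ^ (m + 1 - j)`. -/
theorem norm_iteratedFDeriv_dil_le {n : ℕ} (d : Fin n → ℕ) (hd : ∀ i, 1 ≤ d i) (m : ℕ)
    (R : 𝓢(Fin n → ℝ, ℂ)) (hR : ∀ j ≤ m, iteratedFDeriv ℝ j R 0 = 0) (j : ℕ) :
    ∃ C : ℝ, 0 ≤ C ∧ ∀ (lam : ℝ) (h0 : 0 < lam), lam ≤ 1 → ∀ x,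
      ‖iteratedFDeriv ℝ j (R ∘ dilEquiv d lam h0.ne') x‖ ≤
        C * lam ^ (m + 1) * ‖x‖ ^ (m + 1 - j) := by
  obtain ⟨C, hC, h⟩ := exists_bound_of_flat m R hR j
  refine ⟨C, hC, fun lam h0 h1 x => ?_⟩
  have e := (dilEquiv d lam h0.ne').toContinuousLinearMap.iteratedFDeriv_comp_right
    (R.smooth ⊤) x (i := j) (mod_cast le_top)
  simp only [ContinuousLinearEquiv.coe_coe] at e
  rw [e]
  have hop : ‖(dilEquiv d lam h0.ne').toContinuousLinearMap‖ ≤ lam :=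
    ContinuousLinearMap.opNorm_le_bound _ h0.le fun y => by
      simpa [dilEquiv_apply] using norm_dil_le d hd h0 h1 y
  have hx : ‖dilEquiv d lam h0.ne' x‖ ≤ lam * ‖x‖ := by
    simpa [dilEquiv_apply] using norm_dil_le d hd h0 h1 x
  calc _ ≤ ‖iteratedFDeriv ℝ j R (dilEquiv d lam h0.ne' x)‖ *
        ∏ _i : Fin j, ‖(dilEquiv d lam h0.ne').toContinuousLinearMap‖ :=
        ContinuousMultilinearMap.norm_compContinuousLinearMap_le _ _
    _ ≤ (C * (lam * ‖x‖) ^ (m + 1 - j)) * ∏ _i : Fin j, lam := by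
        gcongr
        exact (h _).trans (by gcongr)
    _ = C * ‖x‖ ^ (m + 1 - j) * lam ^ ((m + 1 - j) + j) := by
        rw [Finset.prod_const, Finset.card_univ, Fintype.card_fin, mul_pow, pow_add]; ring
    _ ≤ C * ‖x‖ ^ (m + 1 - j) * lam ^ (m + 1) := by
        gcongr ?_ * ?_
        exact pow_le_pow_of_le_one h0.le h1 (by omega)
    _ = _ := by ring

/-- For `R` flat to order `m`, each Schwartz seminorm of `χ * (R ∘ δ_λ)` is `O(λ ^ (m + 1))` as
`λ → 0`. The polynomial growth in `x` of the bound on `D^j (R ∘ δ_λ)` is absorbed by a higher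
seminorm of `χ`. -/
theorem seminorm_cutoff_dil_le {n : ℕ} (d : Fin n → ℕ) (hd : ∀ i, 1 ≤ d i) (m : ℕ)
    (χ R : 𝓢(Fin n → ℝ, ℂ)) (hR : ∀ j ≤ m, iteratedFDeriv ℝ j R 0 = 0) (k l : ℕ) :
    ∃ C : ℝ, 0 ≤ C ∧ ∀ (lam : ℝ) (h0 : 0 < lam), lam ≤ 1 →
      SchwartzMap.seminorm ℂ k l (smulLeftCLM ℂ χ
        (compCLMOfContinuousLinearEquiv ℂ (dilEquiv d lam h0.ne') R)) ≤ C * lam ^ (m + 1) := by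
  choose C hC h using norm_iteratedFDeriv_dil_le d hd m R hR
  refine ⟨∑ i ∈ Finset.range (l + 1), (l.choose i : ℝ) *
    SchwartzMap.seminorm ℂ (k + (m + 1 - (l - i))) i χ * C (l - i),
    Finset.sum_nonneg fun i _ => mul_nonneg (by positivity) (hC _), fun lam h0 h1 => ?_⟩
  refine seminorm_le_bound ℂ k l _ (mul_nonneg
    (Finset.sum_nonneg fun i _ => mul_nonneg (by positivity) (hC _)) (by positivity)) fun x => ?_
  have e : (smulLeftCLM ℂ χ (compCLMOfContinuousLinearEquiv ℂ (dilEquiv d lam h0.ne') R) :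
      (Fin n → ℝ) → ℂ) = fun y => χ y * (R ∘ dilEquiv d lam h0.ne') y := by
    rw [smulLeftCLM_apply χ.hasTemperateGrowth]; rfl
  rw [e]
  have hL := norm_iteratedFDeriv_mul_le (𝕜 := ℝ) (χ.smooth ⊤)
    ((R.smooth ⊤).comp (dilEquiv d lam h0.ne').contDiff) x (n := l) (mod_cast le_top)
  refine (mul_le_mul_of_nonneg_left hL (by positivity)).trans ?_
  rw [Finset.mul_sum, Finset.sum_mul]
  refine Finset.sum_le_sum fun i _ => ?_
  have h2 := h (l - i) lam h0 h1 x
  have h3 := χ.le_seminorm ℂ (k + (m + 1 - (l - i))) i x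
  calc _ ≤ ‖x‖ ^ k * ((l.choose i : ℝ) * ‖iteratedFDeriv ℝ i χ x‖ *
        (C (l - i) * lam ^ (m + 1) * ‖x‖ ^ (m + 1 - (l - i)))) := by gcongr
    _ = (l.choose i : ℝ) * (‖x‖ ^ (k + (m + 1 - (l - i))) * ‖iteratedFDeriv ℝ i χ x‖) *
        C (l - i) * lam ^ (m + 1) := by rw [pow_add]; ring
    _ ≤ _ := by
        have := hC (l - i)
        gcongr

theorem exists_seminorm_bound {n : ℕ} (u : 𝓢(Fin n → ℝ, ℂ) →L[ℂ] ℂ) :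
    ∃ (s : Finset (ℕ × ℕ)) (C : ℝ), 0 ≤ C ∧
      ∀ φ, ‖u φ‖ ≤ C * ∑ p ∈ s, SchwartzMap.seminorm ℂ p.1 p.2 φ := by
  obtain ⟨s, C, -, h⟩ := Seminorm.bound_of_continuous
    (schwartz_withSeminorms ℂ (Fin n → ℝ) ℂ) ((normSeminorm ℂ ℂ).comp u.toLinearMap)
    (u.continuous.norm)
  refine ⟨s, C, C.2, fun φ => (h φ).trans ?_⟩
  refine mul_le_mul_of_nonneg_left
    ((Seminorm.finset_sup_le_sum (schwartzSeminormFamily ℂ (Fin n → ℝ) ℂ) s φ).trans_eq ?_) C.2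
  rw [← FunLike.coeAddMonoidHom_apply, map_sum, Finset.sum_apply]
  rfl

/-- A compactly supported distribution that is homogeneous of degree `m` vanishes on test functions
whose derivatives of order at most `m` are zero at the origin. -/
theorem apply_eq_zero_of_flat {n : ℕ} (d : Fin n → ℕ) (hd : ∀ i, 1 ≤ d i) (m : ℕ)
    (u : SchwartzMap (Fin n → ℝ) ℂ →L[ℂ] ℂ)
    (hsupp : ∃ K : Set (Fin n → ℝ), IsCompact K ∧
      ∀ φ : SchwartzMap (Fin n → ℝ) ℂ,
        (∃ U : Set (Fin n → ℝ), IsOpen U ∧ K ⊆ U ∧ ∀ x ∈ U, φ x = 0) → u φ = 0)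
    (hhom : ∀ lam : ℝ, 0 < lam →
      ∀ φ ψ : SchwartzMap (Fin n → ℝ) ℂ, (∀ ξ, ψ ξ = φ (dil d lam ξ)) →
        u ψ = ((lam ^ m : ℝ) : ℂ) * u φ)
    (R : 𝓢(Fin n → ℝ, ℂ)) (hR : ∀ j ≤ m, iteratedFDeriv ℝ j R 0 = 0) : u R = 0 := by
  obtain ⟨K, hK, hu⟩ := hsupp
  obtain ⟨r, hr⟩ := hK.isBounded.subset_ball (0 : Fin n → ℝ)
  let f : ContDiffBump (0 : Fin n → ℝ) := ⟨max r 1, max r 1 + 1, by positivity, by simp⟩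
  have hf : HasCompactSupport (Complex.ofRealCLM ∘ f) := f.hasCompactSupport.comp_left rfl
  let χ : 𝓢(Fin n → ℝ, ℂ) := hf.toSchwartzMap (Complex.ofRealCLM.contDiff.comp f.contDiff)
  have hχ : ∀ x ∈ Metric.ball (0 : Fin n → ℝ) r, χ x = 1 := fun x hx => by
    have : f x = 1 := f.one_of_mem_closedBall
      (Metric.ball_subset_closedBall (Metric.ball_subset_ball (le_max_left r 1) hx))
    simp [χ, this]
  have hcut : ∀ φ, u (smulLeftCLM ℂ χ φ) = u φ := fun φ => by
    rw [← sub_eq_zero, ← map_sub]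
    refine hu _ ⟨_, Metric.isOpen_ball, hr, fun x hx => ?_⟩
    simp [smulLeftCLM_apply_apply χ.hasTemperateGrowth, hχ x hx]
  obtain ⟨s, C, hC, hb⟩ := exists_seminorm_bound u
  choose A hA h using seminorm_cutoff_dil_le d hd m χ R hR
  have main : ∀ lam : ℝ, 0 < lam → lam ≤ 1 →
      ‖u R‖ ≤ C * (∑ p ∈ s, A p.1 p.2) * lam := fun lam h0 h1 => by
    have e := hhom lam h0 R (compCLMOfContinuousLinearEquiv ℂ (dilEquiv d lam h0.ne') R)
      (fun ξ => by simp [dilEquiv_apply])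
    have h2 := hb (smulLeftCLM ℂ χ (compCLMOfContinuousLinearEquiv ℂ (dilEquiv d lam h0.ne') R))
    rw [hcut, e, norm_mul, Complex.norm_real, Real.norm_of_nonneg (by positivity)] at h2
    -- one factor of `lam` is left over after dividing by `lam ^ m`
    have h3 : lam ^ m * ‖u R‖ ≤ lam ^ m * (C * (∑ p ∈ s, A p.1 p.2) * lam) := by
      refine h2.trans ((mul_le_mul_of_nonneg_left
        (Finset.sum_le_sum fun p _ => h p.1 p.2 lam h0 h1) hC).trans_eq ?_)
      rw [← Finset.sum_mul]; ring
    exact le_of_mul_le_mul_left h3 (by positivity)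
  have ht : Tendsto (fun lam : ℝ => C * (∑ p ∈ s, A p.1 p.2) * lam) (𝓝[>] 0) (𝓝 0) := by
    have : Continuous (fun lam : ℝ => C * (∑ p ∈ s, A p.1 p.2) * lam) := by fun_prop
    simpa using (this.tendsto 0).mono_left nhdsWithin_le_nhds
  have : ‖u R‖ ≤ 0 := ge_of_tendsto ht (by
    filter_upwards [Ioc_mem_nhdsGT (zero_lt_one' ℝ)] with lam hl using main lam hl.1 hl.2)
  simpa using this

/-- The partial derivative `∂_i` as an endomorphism of Schwartz space. -/
noncomputable def pdL {n : ℕ} (i : Fin n) : Module.End ℂ 𝓢(Fin n → ℝ, ℂ) :=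
  (lineDerivOpCLM ℂ 𝓢(Fin n → ℝ, ℂ) (Pi.single i 1 : Fin n → ℝ)).toLinearMap

theorem pdL_apply {n : ℕ} (i : Fin n) (f : 𝓢(Fin n → ℝ, ℂ)) :
    pdL i f = ∂_{(Pi.single i 1 : Fin n → ℝ)} f := rfl

theorem coe_pdL {n : ℕ} (i : Fin n) (f : 𝓢(Fin n → ℝ, ℂ)) : ⇑(pdL i f) = pd i f := rfl

theorem pdL_commute {n : ℕ} (i j : Fin n) : Commute (pdL i) (pdL j) := by
  refine LinearMap.ext fun f => SchwartzMap.ext fun x => ?_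
  have key : ∀ v w : Fin n → ℝ, ∂_{v} (∂_{w} f) x = fderiv ℝ (fderiv ℝ f) x v w := fun v w => by
    rw [lineDerivOp_apply_eq_fderiv]
    have e : (⇑(∂_{w} f : 𝓢(Fin n → ℝ, ℂ)) : (Fin n → ℝ) → ℂ) = fun y => fderiv ℝ f y w := rfl
    have hd : DifferentiableAt ℝ (fderiv ℝ f) x :=
      (((f.smooth ⊤).fderiv_right (m := 1) (by norm_cast)).differentiable one_ne_zero) x
    rw [e, fderiv_clm_apply hd (differentiableAt_const w)]
    simp
  have hs : IsSymmSndFDerivAt ℝ f x :=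
    (f.smooth ⊤).contDiffAt.isSymmSndFDerivAt
      (by simp [minSmoothness_of_isRCLikeNormedField]; norm_cast)
  simp only [Module.End.mul_apply, pdL_apply, key]
  exact hs _ _

/-- The multi-index derivative `∂^b` as an endomorphism of Schwartz space. -/
noncomputable def mpdL {n : ℕ} (b : Fin n → ℕ) : Module.End ℂ 𝓢(Fin n → ℝ, ℂ) :=
  ((List.finRange n).map fun i => pdL i ^ b i).prod

theorem coe_mpdL {n : ℕ} (b : Fin n → ℕ) (f : 𝓢(Fin n → ℝ, ℂ)) : ⇑(mpdL b f) = mpd b f := by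
  have hpow : ∀ (i : Fin n) (k : ℕ) (g : 𝓢(Fin n → ℝ, ℂ)),
      ⇑((pdL i ^ k) g) = (pd i)^[k] g := fun i k g => by
    induction k with
    | zero => rfl
    | succ k ih => rw [pow_succ', Module.End.mul_apply, coe_pdL, ih, Function.iterate_succ_apply']
  unfold mpdL mpd
  induction List.finRange n with
  | nil => rfl
  | cons i l ih =>
    rw [List.map_cons, List.prod_cons, Module.End.mul_apply, hpow, ih, List.foldr_cons,
      Function.comp_apply]

/-- Since partial derivatives commute, a product of them depends only on how often each one
occurs. -/
theorem prod_map_pdL {n : ℕ} (s : List (Fin n)) :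
    (s.map pdL).prod = mpdL fun i => s.count i := by
  have hperm : s.Perm ((List.finRange n).flatMap fun i => List.replicate (s.count i) i) := by
    rw [List.perm_iff_count]
    intro a
    rw [List.count_flatMap]
    have : (List.count a ∘ fun i => List.replicate (s.count i) i) =
        fun i => if i = a then s.count a else 0 := by
      ext i
      by_cases h : i = a <;> simp [List.count_replicate, h]
    rw [this, ← Fin.sum_univ_def]
    simp
  have h := (hperm.map pdL).prod_eq' (List.pairwise_map.2
    (List.pairwise_of_forall fun i j => pdL_commute i j))
  rw [h, mpdL]
  generalize List.finRange n = l
  induction l with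
  | nil => rfl
  | cons i l ih => simp [ih]

theorem iteratedFDeriv_basis {n j : ℕ} (s : Fin j → Fin n) (f : 𝓢(Fin n → ℝ, ℂ)) :
    iteratedFDeriv ℝ j f 0 (fun k => Pi.single (s k) 1) =
      mpd (fun i => (List.ofFn s).count i) f 0 := by
  rw [← iteratedLineDerivOp_eq_iteratedFDeriv, ← coe_mpdL, ← prod_map_pdL]
  congr 1
  induction j with
  | zero => rfl
  | succ j ih =>
    rw [iteratedLineDerivOp_succ_left, List.ofFn_succ, List.map_cons, List.prod_cons,
      Module.End.mul_apply, pdL_apply, ← ih]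
    rfl

theorem flat_of_mpd_eq_zero {n : ℕ} (m : ℕ) (R : 𝓢(Fin n → ℝ, ℂ))
    (h : ∀ b : Fin n → ℕ, (∀ i, b i ≤ m) → mpd b R 0 = 0) (j : ℕ) (hj : j ≤ m) :
    iteratedFDeriv ℝ j R 0 = 0 := by
  refine ContinuousMultilinearMap.toMultilinearMap_injective
    (Module.Basis.ext_multilinear (fun _ => Pi.basisFun ℝ (Fin n)) fun s => ?_)
  simp only [Pi.basisFun_apply]
  exact (iteratedFDeriv_basis s R).trans (h _ fun i => (List.count_le_length.trans (by simpa)))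

theorem mpdL_comp_dilEquiv {n : ℕ} (d : Fin n → ℕ) (lam : ℝ) (h0 : lam ≠ 0) (b : Fin n → ℕ)
    (f : 𝓢(Fin n → ℝ, ℂ)) :
    mpdL b (compCLMOfContinuousLinearEquiv ℂ (dilEquiv d lam h0) f) =
      (lam : ℂ) ^ horder d b • compCLMOfContinuousLinearEquiv ℂ (dilEquiv d lam h0) (mpdL b f) := by
  set T := compCLMOfContinuousLinearEquiv ℂ (F := ℂ) (dilEquiv d lam h0)
  have h1 : ∀ (i : Fin n) (g : 𝓢(Fin n → ℝ, ℂ)),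
      pdL i (T g) = (lam : ℂ) ^ d i • T (pdL i g) := fun i g => by
    have e : dilEquiv d lam h0 (Pi.single i 1) = lam ^ d i • (Pi.single i 1 : Fin n → ℝ) := by
      ext k
      rw [dilEquiv_apply]
      by_cases hk : k = i
      · subst hk; simp [dil]
      · simp [dil, hk]
    rw [pdL_apply, lineDerivOp_compCLMOfContinuousLinearEquiv, e, lineDerivOp_left_smul]
    ext x
    simp [T, pdL_apply]
  have h2 : ∀ (i : Fin n) (k : ℕ) (g : 𝓢(Fin n → ℝ, ℂ)),
      (pdL i ^ k) (T g) = (lam : ℂ) ^ (k * d i) • T ((pdL i ^ k) g) := fun i k g => by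
    induction k with
    | zero => simp
    | succ k ih =>
      rw [pow_succ', Module.End.mul_apply, ih, map_smul, h1, smul_smul, Module.End.mul_apply,
        ← pow_add, Nat.succ_mul]
  unfold mpdL horder
  rw [Fin.sum_univ_def]
  induction List.finRange n with
  | nil => simp
  | cons i l ih =>
    rw [List.map_cons, List.prod_cons, Module.End.mul_apply, ih, map_smul, h2, smul_smul,
      Module.End.mul_apply, ← pow_add, List.map_cons, List.sum_cons, add_comm]

theorem stmt14 {n : ℕ} (d : Fin n → ℕ) (hd : ∀ i, 1 ≤ d i) (m : ℕ)
    (u : SchwartzMap (Fin n → ℝ) ℂ →L[ℂ] ℂ)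
    (hsupp : ∃ K : Set (Fin n → ℝ), IsCompact K ∧
      ∀ φ : SchwartzMap (Fin n → ℝ) ℂ,
        (∃ U : Set (Fin n → ℝ), IsOpen U ∧ K ⊆ U ∧ ∀ x ∈ U, φ x = 0) → u φ = 0)
    (hhom : ∀ lam : ℝ, 0 < lam →
      ∀ φ ψ : SchwartzMap (Fin n → ℝ) ℂ, (∀ ξ, ψ ξ = φ (dil d lam ξ)) →
        u ψ = ((lam ^ m : ℝ) : ℂ) * u φ) :
    ∃ c : (Fin n → ℕ) → ℂ,
      ∀ φ : SchwartzMap (Fin n → ℝ) ℂ,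
        u φ = ∑ b ∈ (Fintype.piFinset fun _ : Fin n => Finset.range (m + 1)).filter
            (fun b => horder d b = m),
          c b * mpd b (⇑φ) 0 := by
  classical
  set B : Finset (Fin n → ℕ) := Fintype.piFinset fun _ : Fin n => Finset.range (m + 1) with hB
  let ev : 𝓢(Fin n → ℝ, ℂ) →ₗ[ℂ] ℂ := ⟨⟨fun f => f 0, fun _ _ => rfl⟩, fun _ _ => rfl⟩
  let L : B → 𝓢(Fin n → ℝ, ℂ) →ₗ[ℂ] ℂ := fun b => ev ∘ₗ mpdL b.1
  have hL : ∀ b φ, L b φ = mpd b.1 φ 0 := fun b φ => congrFun (coe_mpdL b.1 φ) 0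
  have hspan : u.toLinearMap ∈ Submodule.span ℂ (Set.range L) := by
    refine mem_span_of_iInf_ker_le_ker fun R hR => ?_
    rw [Submodule.mem_iInf] at hR
    refine apply_eq_zero_of_flat d hd m u hsupp hhom R (flat_of_mpd_eq_zero m R fun b hb => ?_)
    rw [← hL ⟨b, by simpa [hB, Nat.lt_succ_iff] using hb⟩]
    exact hR _
  obtain ⟨c, hc⟩ := (Submodule.mem_span_range_iff_exists_fun ℂ).1 hspan
  let c' : (Fin n → ℕ) → ℂ := fun b => if h : b ∈ B then c ⟨b, h⟩ else 0
  have hc' : ∀ φ, u φ = ∑ b ∈ B, c' b * mpd b φ 0 := fun φ => by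
    rw [← Finset.sum_coe_sort B]
    have := LinearMap.congr_fun hc φ
    rw [LinearMap.sum_apply] at this
    refine Eq.trans this.symm (Finset.sum_congr rfl fun b _ => ?_)
    simp [c', ← hL]
  refine ⟨c', fun φ => ?_⟩
  have hlam : ∀ lam : ℝ, 0 < lam →
      ∑ b ∈ B, c' b * mpd b φ 0 * (lam : ℂ) ^ horder d b = u φ * (lam : ℂ) ^ m := fun lam h0 => by
    have e := hhom lam h0 φ (compCLMOfContinuousLinearEquiv ℂ (dilEquiv d lam h0.ne') φ)
      (fun ξ => by simp [dilEquiv_apply])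
    rw [hc', Complex.ofReal_pow, mul_comm] at e
    rw [← e]
    refine Finset.sum_congr rfl fun b _ => ?_
    rw [← coe_mpdL, ← coe_mpdL, mpdL_comp_dilEquiv]
    simp only [smul_apply, compCLMOfContinuousLinearEquiv_apply, Function.comp_apply, map_zero,
      smul_eq_mul]
    ring
  let P : Polynomial ℂ := ∑ b ∈ B, Polynomial.C (c' b * mpd b φ 0) * Polynomial.X ^ horder d b
  have hP : P = Polynomial.C (u φ) * Polynomial.X ^ m := by
    refine Polynomial.eq_of_infinite_eval_eq _ _ (Set.Infinite.mono ?_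
      ((Set.Ioi_infinite (0 : ℝ)).image Complex.ofReal_injective.injOn))
    rintro _ ⟨lam, h0, rfl⟩
    simpa [P, Polynomial.eval_finsetSum] using hlam lam h0
  have hcoef := congrArg (fun Q => Polynomial.coeff Q m) hP
  simp only [P, Polynomial.finsetSum_coeff, Polynomial.coeff_C_mul_X_pow, if_true] at hcoef
  rw [← hcoef, Finset.sum_filter]
  exact Finset.sum_congr rfl fun b _ => by simp only [eq_comm]
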